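/- Assume φ''_F > 0, φ''_{2F} ≤ 0, and A_F > 0. Suppose the preconditioned operator L^{−1} L^qcf is diagonalizable, L^{−1} L^qcf = Ṽ Λ̃ Ṽ^{−1}, where Ṽ : U → U is invertible and Λ̃ is diagonal with real diagonal entries whose multiset coincides with the set of generalized eigenvalues μ of L^qnl v = μ L v (counted with multiplicity). Then for every m ∈ ℕ and every r⁰ ∈ U, min{ ‖p(L^{−1} L^qcf) L^{−1} r⁰‖_{ℓ²_ε} : p a real polynomial, deg p ≤ m, p(0) = 1 } ≤ 2 κ(Ṽ) ((1 − √(A_F/φ''_F)) / (1 + √(A_F/φ''_F)))^m ‖L^{−1} r⁰‖_{ℓ²_ε}, where κ(Ṽ) = ‖Ṽ‖ ‖Ṽ^{−1}‖ is the condition number of Ṽ in the ℓ²_ε operator norm. -/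

import Mathlib

/-!
For a polynomial `p` with `p(0) = 1`, the diagonalization gives
`p(L⁻¹ L^qcf) = V p(Λ) V⁻¹`, and `p(Λ)` is diagonal, so
`‖p(L⁻¹ L^qcf) w‖ ≤ κ(V) · max |p(lam j)| · ‖w‖` (`aeval_conj`, `normE_aeval_diag_le`,
`normE_apply_le`). It remains to locate the entries `lam j` and to choose `p`.

Each `lam j` is a generalized eigenvalue of `L^qnl v = μ L v`, hence a Rayleigh quotient
`⟨L^qnl v, v⟩ / ⟨L v, v⟩`. Summation by parts (`ipE_lap`) identifies the denominator with the
discrete Dirichlet energy, and `Bqnl_bounds` then puts the quotient in `[A_F, φ''_F]`.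

On that interval the scaled and shifted Chebyshev polynomial, normalized to `1` at the origin, is
bounded by `2 q ^ m` with `q = (1 - √(A_F/φ''_F)) / (1 + √(A_F/φ''_F))`
(`exists_poly_small_on_Icc`).
-/

open Finset

noncomputable section

attribute [local instance] Classical.propDecidable

/-- lattice spacing ε = 1/N -/
def eps (N : ℕ) : ℝ := 1 / N

/-- the displacement space U as a submodule of ℤ → ℝ -/
def Usub (N : ℕ) : Submodule ℝ (ℤ → ℝ) where
  carrier := {u | ∀ j : ℤ, ((N : ℤ) ≤ j ∨ j ≤ -(N : ℤ)) → u j = 0}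
  add_mem' := by
    intro a b ha hb j hj
    simp [Pi.add_apply, ha j hj, hb j hj]
  zero_mem' := by intro j hj; rfl
  smul_mem' := by
    intro c a ha j hj
    simp [Pi.smul_apply, ha j hj]

lemma mem_Usub {N : ℕ} {u : ℤ → ℝ} :
    u ∈ Usub N ↔ ∀ j : ℤ, ((N : ℤ) ≤ j ∨ j ≤ -(N : ℤ)) → u j = 0 := Iff.rfl

/-- backward first difference -/
def D1 (N : ℕ) (u : ℤ → ℝ) (ℓ : ℤ) : ℝ := (u ℓ - u (ℓ - 1)) / eps N

/-- the ℓ²_ε inner product -/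
def ipE (N : ℕ) (v w : ℤ → ℝ) : ℝ :=
  eps N * ∑ ℓ ∈ Icc (-(N : ℤ) + 1) (N : ℤ), v ℓ * w ℓ

/-- the ℓ²_ε norm -/
def normE (N : ℕ) (v : ℤ → ℝ) : ℝ :=
  Real.sqrt (eps N * ∑ ℓ ∈ Icc (-(N : ℤ) + 1) (N : ℤ), (v ℓ) ^ 2)

/-- the ℓ²_ε operator norm of an endomorphism of U -/
def opNormE (N : ℕ) (f : ↥(Usub N) →ₗ[ℝ] ↥(Usub N)) : ℝ :=
  sSup ((fun v : ↥(Usub N) => normE N ((f v : ℤ → ℝ))) ''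
    {v : ↥(Usub N) | normE N (v : ℤ → ℝ) = 1})

/-- the QNL bilinear form -/
def Bqnl (N K : ℕ) (φF φ2F : ℝ) (u v : ℤ → ℝ) : ℝ :=
  (φF + 4 * φ2F) * (eps N * ∑ ℓ ∈ Icc (-(N : ℤ) + 1) (N : ℤ), D1 N u ℓ * D1 N v ℓ)
    - φ2F * (eps N * ∑ ℓ ∈ Icc (-(K : ℤ)) (K : ℤ),
        (D1 N u (ℓ + 1) - D1 N u ℓ) * (D1 N v (ℓ + 1) - D1 N v ℓ))

/-- the linearized force-based quasicontinuum operator, pointwise -/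
def lqcfFun (N K : ℕ) (φF φ2F : ℝ) (v : ℤ → ℝ) (j : ℤ) : ℝ :=
  if -(N : ℤ) + 1 ≤ j ∧ j ≤ (N : ℤ) - 1 then
    if -(K : ℤ) ≤ j ∧ j ≤ (K : ℤ) then
      φF * (-v (j + 1) + 2 * v j - v (j - 1)) / (eps N) ^ 2
        + φ2F * (-v (j + 2) + 2 * v j - v (j - 2)) / (eps N) ^ 2
    else
      (φF + 4 * φ2F) * (-v (j + 1) + 2 * v j - v (j - 1)) / (eps N) ^ 2
  else 0

/-- L^qcf as a linear map on ℤ → ℝ -/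
def lqcfLin (N K : ℕ) (φF φ2F : ℝ) : (ℤ → ℝ) →ₗ[ℝ] (ℤ → ℝ) where
  toFun v := lqcfFun N K φF φ2F v
  map_add' u v := by
    funext j
    simp only [lqcfFun, Pi.add_apply]
    split_ifs <;> ring
  map_smul' c v := by
    funext j
    simp only [lqcfFun, Pi.smul_apply, smul_eq_mul, RingHom.id_apply]
    split_ifs <;> ring

lemma lqcf_mem (N K : ℕ) (φF φ2F : ℝ) (v : ℤ → ℝ) :
    lqcfLin N K φF φ2F v ∈ Usub N := by
  rw [mem_Usub]
  intro j hj
  show lqcfFun N K φF φ2F v j = 0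
  unfold lqcfFun
  rw [if_neg (by omega)]

/-- L^qcf as an endomorphism of U -/
def LqcfE (N K : ℕ) (φF φ2F : ℝ) : Module.End ℝ ↥(Usub N) :=
  (lqcfLin N K φF φ2F).restrict (fun v _ => lqcf_mem N K φF φ2F v)

/-- the discrete Laplacian, pointwise -/
def lapFun (N : ℕ) (v : ℤ → ℝ) (j : ℤ) : ℝ :=
  if -(N : ℤ) + 1 ≤ j ∧ j ≤ (N : ℤ) - 1 then
    (-v (j + 1) + 2 * v j - v (j - 1)) / (eps N) ^ 2
  else 0

/-- the discrete Laplacian as a linear map on ℤ → ℝ -/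
def lapLin (N : ℕ) : (ℤ → ℝ) →ₗ[ℝ] (ℤ → ℝ) where
  toFun v := lapFun N v
  map_add' u v := by
    funext j
    simp only [lapFun, Pi.add_apply]
    split_ifs <;> ring
  map_smul' c v := by
    funext j
    simp only [lapFun, Pi.smul_apply, smul_eq_mul, RingHom.id_apply]
    split_ifs <;> ring

lemma lap_mem (N : ℕ) (v : ℤ → ℝ) : lapLin N v ∈ Usub N := by
  rw [mem_Usub]
  intro j hj
  show lapFun N v j = 0
  unfold lapFun
  rw [if_neg (by omega)]

/-- the discrete Laplacian as an endomorphism of U -/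
def LapE (N : ℕ) : Module.End ℝ ↥(Usub N) :=
  (lapLin N).restrict (fun v _ => lap_mem N v)

/-! ### Chebyshev polynomials normalized at the origin -/

/-- The Chebyshev polynomial of degree `m`, transplanted from `[-1, 1]` to `[a, b]` and divided by
its value at `0`. Writing `q` for the convergence factor, the origin corresponds to the point
`(q + q⁻¹) / 2`, where `T_m` takes the value `(q ^ m + q⁻¹ ^ m) / 2`. -/
lemma exists_poly_small_on_Icc {a b : ℝ} (ha : 0 < a) (hab : a ≤ b) (m : ℕ) :
    ∃ p : Polynomial ℝ, p.natDegree ≤ m ∧ p.eval 0 = 1 ∧ ∀ x, a ≤ x → x ≤ b →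
      |p.eval x| ≤ 2 * ((1 - Real.sqrt (a / b)) / (1 + Real.sqrt (a / b))) ^ m := by
  have hb : 0 < b := ha.trans_le hab
  rcases hab.eq_or_lt with rfl | hlt
  · -- The interval is a point and the factor vanishes: `1 - x / a` is exactly `0` there.
    rcases Nat.eq_zero_or_pos m with rfl | hm
    · exact ⟨1, by simp, by simp, fun x _ _ => by norm_num⟩
    · refine ⟨1 - Polynomial.C a⁻¹ * Polynomial.X, ?_, by simp, fun x h1 h2 => ?_⟩
      · exact (by compute_degree : (1 - Polynomial.C a⁻¹ * Polynomial.X : Polynomial ℝ).natDegree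
          ≤ 1).trans hm
      · obtain rfl : x = a := le_antisymm h2 h1
        simp [ha.ne', hm.ne']
  set s := Real.sqrt (a / b) with hs
  have hs0 : 0 < s := Real.sqrt_pos.2 (div_pos ha hb)
  have hs2 : s ^ 2 = a / b := Real.sq_sqrt (div_pos ha hb).le
  have hs1 : s < 1 := by
    have : s ^ 2 < 1 := by rw [hs2, div_lt_one hb]; exact hlt
    nlinarith
  set q := (1 - s) / (1 + s) with hq
  have hq0 : 0 < q := div_pos (by linarith) (by linarith)
  have hd : b - a ≠ 0 := by linarith
  set z := (b + a) / (b - a) with hz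
  have hzq : z = Real.cosh (Real.log q) := by
    have ha' : a = s ^ 2 * b := by rw [hs2]; field_simp
    have h1 : (1 - s) ≠ 0 := by linarith
    have h2 : (1 + s) ≠ 0 := by linarith
    have h3 : 1 - s ^ 2 ≠ 0 := by nlinarith
    have h4 : b - s ^ 2 * b ≠ 0 := by rw [← ha']; exact hd
    rw [Real.cosh_log hq0, hz, hq, ha', inv_div]
    field_simp
    ring
  have hTz : (Polynomial.Chebyshev.T ℝ m).eval z = (q ^ m + (q ^ m)⁻¹) / 2 := by
    rw [hzq, Polynomial.Chebyshev.T_real_cosh, ← Real.cosh_log (pow_pos hq0 m), Real.log_pow]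
    simp
  have hqm : 0 < q ^ m := pow_pos hq0 m
  have hTpos : 0 < (Polynomial.Chebyshev.T ℝ m).eval z := by rw [hTz]; positivity
  refine ⟨Polynomial.C ((Polynomial.Chebyshev.T ℝ m).eval z)⁻¹ *
    (Polynomial.Chebyshev.T ℝ m).comp
      (Polynomial.C z - Polynomial.C (2 / (b - a)) * Polynomial.X), ?_, ?_, ?_⟩
  · refine (Polynomial.natDegree_C_mul_le _ _).trans (Polynomial.natDegree_comp_le.trans ?_)
    rw [Polynomial.Chebyshev.natDegree_T, Int.natAbs_natCast]
    have : (Polynomial.C z - Polynomial.C (2 / (b - a)) * Polynomial.X : Polynomial ℝ).natDegree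
      ≤ 1 := by compute_degree
    nlinarith
  · simp [Polynomial.eval_comp, hTpos.ne']
  · intro x h1 h2
    have hx : |z - 2 / (b - a) * x| ≤ 1 := by
      have : z - 2 / (b - a) * x = (b + a - 2 * x) / (b - a) := by rw [hz]; ring
      rw [this, abs_le, le_div_iff₀ (by linarith), div_le_iff₀ (by linarith)]
      constructor <;> linarith
    have hT := Polynomial.Chebyshev.abs_eval_T_real_le_one m hx
    have hinv : ((Polynomial.Chebyshev.T ℝ m).eval z)⁻¹ ≤ 2 * q ^ m := by
      rw [inv_le_comm₀ hTpos (by positivity), hTz, mul_inv]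
      linarith
    simp only [Polynomial.eval_mul, Polynomial.eval_C, Polynomial.eval_comp, Polynomial.eval_sub,
      Polynomial.eval_X, abs_mul]
    rw [abs_of_pos (inv_pos.2 hTpos)]
    calc _ ≤ ((Polynomial.Chebyshev.T ℝ m).eval z)⁻¹ * 1 := by gcongr
      _ ≤ _ := by linarith

/-! ### The discrete norm and its operator norm -/

/-- Restriction of a displacement to the lattice sites entering `normE`, as a Euclidean vector. -/
def toEuc (N : ℕ) :
    ↥(Usub N) →ₗ[ℝ] EuclideanSpace ℝ ↥(Icc (-(N : ℤ) + 1) (N : ℤ)) where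
  toFun u := WithLp.toLp 2 (fun i => (u : ℤ → ℝ) i)
  map_add' u v := by ext i; simp
  map_smul' c u := by ext i; simp

lemma eps_pos {N : ℕ} (hN : 2 ≤ N) : 0 < eps N := by
  unfold eps
  have : 0 < N := by omega
  positivity

lemma normE_eq (N : ℕ) (u : ↥(Usub N)) :
    normE N (u : ℤ → ℝ) = Real.sqrt (eps N) * ‖toEuc N u‖ := by
  have h0 : 0 ≤ eps N := by unfold eps; positivity
  rw [normE, Real.sqrt_mul h0, EuclideanSpace.norm_eq]
  congr 2
  rw [← Finset.sum_coe_sort]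
  exact Finset.sum_congr rfl fun i _ => by simp [toEuc]

lemma ker_toEuc (N : ℕ) : LinearMap.ker (toEuc N) = ⊥ := by
  refine LinearMap.ker_eq_bot'.2 fun u hu => ?_
  ext j
  by_cases hj : j ∈ Icc (-(N : ℤ) + 1) (N : ℤ)
  · have := congrArg (fun w : EuclideanSpace ℝ _ => w ⟨j, hj⟩) hu
    simpa [toEuc] using this
  · rw [mem_Icc] at hj
    exact u.2 j (by omega)

lemma normE_nonneg (N : ℕ) (v : ℤ → ℝ) : 0 ≤ normE N v := Real.sqrt_nonneg _

lemma normE_smul (N : ℕ) (c : ℝ) (u : ↥(Usub N)) :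
    normE N ((c • u : ↥(Usub N)) : ℤ → ℝ) = |c| * normE N (u : ℤ → ℝ) := by
  rw [normE_eq, normE_eq, map_smul, norm_smul, Real.norm_eq_abs]
  ring

lemma eq_zero_of_normE {N : ℕ} (hN : 2 ≤ N) {u : ↥(Usub N)} (h : normE N (u : ℤ → ℝ) = 0) :
    u = 0 := by
  rw [normE_eq] at h
  rcases mul_eq_zero.1 h with h | h
  · exact absurd h (Real.sqrt_pos.2 (eps_pos hN)).ne'
  · exact LinearMap.ker_eq_bot'.1 (ker_toEuc N) u (norm_eq_zero.1 h)

/-- The set defining `opNormE` is bounded, because `U` is finite-dimensional; so `opNormE` is a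
genuine supremum. -/
lemma exists_bound (N : ℕ) (f : ↥(Usub N) →ₗ[ℝ] ↥(Usub N)) :
    ∃ C : ℝ, ∀ v : ↥(Usub N), normE N (f v : ℤ → ℝ) ≤ C * normE N (v : ℤ → ℝ) := by
  obtain ⟨g, hg⟩ := LinearMap.exists_leftInverse_of_injective (toEuc N) (ker_toEuc N)
  set F := LinearMap.toContinuousLinearMap (toEuc N ∘ₗ f ∘ₗ g) with hF
  refine ⟨‖F‖, fun v => ?_⟩
  have hv : F (toEuc N v) = toEuc N (f v) := by
    have : g (toEuc N v) = v := LinearMap.congr_fun hg v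
    simp [hF, this]
  rw [normE_eq, normE_eq, ← hv]
  have := F.le_opNorm (toEuc N v)
  have h0 := Real.sqrt_nonneg (eps N)
  nlinarith

lemma opNormE_nonneg (N : ℕ) (f : ↥(Usub N) →ₗ[ℝ] ↥(Usub N)) : 0 ≤ opNormE N f := by
  refine Real.sSup_nonneg ?_
  rintro _ ⟨v, _, rfl⟩
  exact normE_nonneg _ _

lemma normE_apply_le {N : ℕ} (hN : 2 ≤ N) (f : ↥(Usub N) →ₗ[ℝ] ↥(Usub N)) (v : ↥(Usub N)) :
    normE N (f v : ℤ → ℝ) ≤ opNormE N f * normE N (v : ℤ → ℝ) := by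
  rcases eq_or_ne (normE N (v : ℤ → ℝ)) 0 with h | h
  · rw [eq_zero_of_normE hN h, map_zero]
    simp [normE]
  have hpos : 0 < normE N (v : ℤ → ℝ) := lt_of_le_of_ne (normE_nonneg _ _) h.symm
  obtain ⟨C, hC⟩ := exists_bound N f
  have hmem : normE N (f ((normE N (v : ℤ → ℝ))⁻¹ • v) : ℤ → ℝ) ≤ opNormE N f := by
    refine le_csSup ⟨C, ?_⟩ ⟨_, ?_, rfl⟩
    · rintro _ ⟨w, hw, rfl⟩
      have := hC w
      rw [Set.mem_ofPred_eq] at hw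
      rwa [hw, mul_one] at this
    · rw [Set.mem_ofPred_eq, normE_smul, abs_of_pos (inv_pos.2 hpos), inv_mul_cancel₀ h]
  rw [map_smul, normE_smul, abs_of_pos (inv_pos.2 hpos), inv_mul_le_iff₀ hpos] at hmem
  linarith

/-! ### Generalized eigenvalues of the quasi-nonlocal operator -/

lemma sum_Icc_telescope (g : ℤ → ℝ) (a b : ℤ) (hab : a ≤ b) :
    ∑ ℓ ∈ Icc (a + 1) b, (g ℓ - g (ℓ - 1)) = g b - g a := by
  induction b, hab using Int.leInduction with
  | base => simp
  | succ n hn ih =>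
    rw [← Finset.insert_Icc_right_eq_Icc_add_one (by omega : a + 1 ≤ n + 1),
      Finset.sum_insert (by simp), ih]
    rw [add_sub_cancel_right]
    ring

/-- Summation by parts, with the boundary terms vanishing on `U`. -/
lemma ipE_lap {N : ℕ} (hN : 2 ≤ N) (v : ↥(Usub N)) :
    ipE N (LapE N v : ℤ → ℝ) (v : ℤ → ℝ)
      = eps N * ∑ ℓ ∈ Icc (-(N : ℤ) + 1) (N : ℤ), D1 N (v : ℤ → ℝ) ℓ * D1 N (v : ℤ → ℝ) ℓ := by
  have he := (eps_pos hN).ne'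
  have hvN : (v : ℤ → ℝ) N = 0 := v.2 _ (by omega)
  have hvN' : (v : ℤ → ℝ) (-N) = 0 := v.2 _ (by omega)
  unfold ipE
  congr 1
  rw [← sub_eq_zero, ← Finset.sum_sub_distrib]
  have htel := sum_Icc_telescope
    (fun ℓ => ((v : ℤ → ℝ) ℓ ^ 2 - (v : ℤ → ℝ) (ℓ + 1) * (v : ℤ → ℝ) ℓ) / eps N ^ 2)
    (-(N : ℤ)) N (by omega)
  simp only [hvN, hvN'] at htel
  rw [show (0 : ℝ) = (0 ^ 2 - (v : ℤ → ℝ) (N + 1) * 0) / eps N ^ 2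
    - (0 ^ 2 - (v : ℤ → ℝ) (-N + 1) * 0) / eps N ^ 2 by ring, ← htel]
  refine Finset.sum_congr rfl fun ℓ hℓ => ?_
  rw [mem_Icc] at hℓ
  change lapFun N (v : ℤ → ℝ) ℓ * _ - _ = _
  unfold lapFun D1
  rw [sub_add_cancel]
  split_ifs with h
  · field_simp
    ring
  · obtain rfl : ℓ = N := by omega
    rw [hvN]
    field_simp
    ring

/-- The discrete `H¹` seminorm is a norm on `U`, since its kernel lies in that of the injective
Laplacian. -/
lemma energy_pos {N : ℕ} (hN : 2 ≤ N) {Linv : Module.End ℝ ↥(Usub N)}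
    (hL : Linv * LapE N = 1) {v : ↥(Usub N)} (hv : v ≠ 0) :
    0 < eps N * ∑ ℓ ∈ Icc (-(N : ℤ) + 1) (N : ℤ),
      D1 N (v : ℤ → ℝ) ℓ * D1 N (v : ℤ → ℝ) ℓ := by
  have he := eps_pos hN
  refine mul_pos he (lt_of_le_of_ne (Finset.sum_nonneg fun ℓ _ => mul_self_nonneg _) fun h => hv ?_)
  have hD := (Finset.sum_eq_zero_iff_of_nonneg fun ℓ _ => mul_self_nonneg _).1 h.symm
  have hLv : LapE N v = 0 := by
    ext j
    change lapFun N (v : ℤ → ℝ) j = 0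
    unfold lapFun
    split_ifs with hj
    · have h1 := mul_self_eq_zero.1 (hD j (mem_Icc.2 (by omega)))
      have h2 := mul_self_eq_zero.1 (hD (j + 1) (mem_Icc.2 (by omega)))
      simp only [D1, div_eq_zero_iff, he.ne', or_false, add_sub_cancel_right] at h1 h2
      rw [div_eq_zero_iff]
      left
      linarith
    · rfl
  have : Linv (LapE N v) = v := LinearMap.congr_fun hL v
  rw [← this, hLv, map_zero]

/-- The Rayleigh quotient bounds. The strain-gradient term is nonnegative, and as
`(a - b)² ≤ 2 a² + 2 b²` while every bond is met at most twice, it costs at most a factor `4`. -/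
lemma Bqnl_bounds {N K : ℕ} (hK2 : (K : ℤ) ≤ (N : ℤ) - 2) {φF φ2F : ℝ} (h2F : φ2F ≤ 0)
    (v : ℤ → ℝ) {E : ℝ}
    (hE : E = eps N * ∑ ℓ ∈ Icc (-(N : ℤ) + 1) (N : ℤ), D1 N v ℓ * D1 N v ℓ) :
    (φF + 4 * φ2F) * E ≤ Bqnl N K φF φ2F v v ∧ Bqnl N K φF φ2F v v ≤ φF * E := by
  have he : 0 ≤ eps N := by unfold eps; positivity
  set S := ∑ ℓ ∈ Icc (-(K : ℤ)) (K : ℤ),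
        (D1 N v (ℓ + 1) - D1 N v ℓ) * (D1 N v (ℓ + 1) - D1 N v ℓ) with hS
  set Q := ∑ ℓ ∈ Icc (-(N : ℤ) + 1) (N : ℤ), D1 N v ℓ * D1 N v ℓ with hQ
  have hB : Bqnl N K φF φ2F v v = (φF + 4 * φ2F) * E - φ2F * (eps N * S) := by
    rw [hE]; rfl
  have hS0 : 0 ≤ S := Finset.sum_nonneg fun ℓ _ => mul_self_nonneg _
  have h1 : ∑ ℓ ∈ Icc (-(K : ℤ)) (K : ℤ), D1 N v ℓ * D1 N v ℓ ≤ Q :=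
    Finset.sum_le_sum_of_subset_of_nonneg (Icc_subset_Icc (by omega) (by omega))
      fun ℓ _ _ => mul_self_nonneg _
  have h2 : ∑ ℓ ∈ Icc (-(K : ℤ)) (K : ℤ), D1 N v (ℓ + 1) * D1 N v (ℓ + 1) ≤ Q := by
    have := Finset.sum_map (Icc (-(K : ℤ)) (K : ℤ)) (addRightEmbedding (1 : ℤ))
      (fun ℓ => D1 N v ℓ * D1 N v ℓ)
    simp only [addRightEmbedding_apply] at this
    rw [← this, Finset.map_add_right_Icc]
    exact Finset.sum_le_sum_of_subset_of_nonneg (Icc_subset_Icc (by omega) (by omega))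
      fun ℓ _ _ => mul_self_nonneg _
  have hS4 : S ≤ 4 * Q := by
    have : S ≤ ∑ ℓ ∈ Icc (-(K : ℤ)) (K : ℤ),
        (2 * (D1 N v (ℓ + 1) * D1 N v (ℓ + 1)) + 2 * (D1 N v ℓ * D1 N v ℓ)) :=
      Finset.sum_le_sum fun ℓ _ => by nlinarith [sq_nonneg (D1 N v (ℓ + 1) + D1 N v ℓ)]
    rw [Finset.sum_add_distrib, ← Finset.mul_sum, ← Finset.mul_sum] at this
    linarith
  have hES : eps N * S ≤ 4 * E := by
    rw [hE]; nlinarith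
  have hES0 : 0 ≤ eps N * S := mul_nonneg he hS0
  rw [hB]
  constructor <;> nlinarith

/-! ### Polynomials in a diagonalizable operator -/

lemma aeval_diag {N : ℕ} {Λ : Module.End ℝ ↥(Usub N)} {lam : ℤ → ℝ}
    (h : ∀ u : ↥(Usub N), ∀ j : ℤ, ((Λ u : ℤ → ℝ)) j = lam j * (u : ℤ → ℝ) j)
    (p : Polynomial ℝ) (u : ↥(Usub N)) (j : ℤ) :
    (Polynomial.aeval Λ p u : ℤ → ℝ) j = p.eval (lam j) * (u : ℤ → ℝ) j := by
  have hpow : ∀ n : ℕ, ((Λ ^ n) u : ℤ → ℝ) j = lam j ^ n * (u : ℤ → ℝ) j := by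
    intro n
    induction n with
    | zero => simp
    | succ n ih => rw [pow_succ', Module.End.mul_apply, h, ih]; ring
  induction p using Polynomial.induction_on' with
  | add p q hp hq => simp [hp, hq, add_mul]
  | monomial n a => simp [Polynomial.aeval_monomial, hpow, mul_assoc]

/-- If `|p| ≤ δ` on the diagonal entries belonging to interior sites, then `p(Λ)` has norm
at most `δ`; the entries at the other sites act on zeros. -/
lemma normE_aeval_diag_le {N : ℕ} {Λ : Module.End ℝ ↥(Usub N)} {lam : ℤ → ℝ}
    (h : ∀ u : ↥(Usub N), ∀ j : ℤ, ((Λ u : ℤ → ℝ)) j = lam j * (u : ℤ → ℝ) j)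
    (p : Polynomial ℝ) {δ : ℝ} (hδ0 : 0 ≤ δ)
    (hδ : ∀ j ∈ Icc (-(N : ℤ) + 1) ((N : ℤ) - 1), |p.eval (lam j)| ≤ δ) (u : ↥(Usub N)) :
    normE N (Polynomial.aeval Λ p u : ℤ → ℝ) ≤ δ * normE N (u : ℤ → ℝ) := by
  have he : 0 ≤ eps N := by unfold eps; positivity
  refine Real.sqrt_le_iff.2 ⟨mul_nonneg hδ0 (normE_nonneg _ _), ?_⟩
  rw [mul_pow, normE, Real.sq_sqrt (mul_nonneg he (Finset.sum_nonneg fun _ _ => sq_nonneg _)),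
    mul_left_comm, Finset.mul_sum _ _ (δ ^ 2)]
  refine mul_le_mul_of_nonneg_left (Finset.sum_le_sum fun j hj => ?_) he
  rw [aeval_diag h, mul_pow]
  rw [mem_Icc] at hj
  by_cases hjN : j = N
  · have : (u : ℤ → ℝ) j = 0 := u.2 j (by omega)
    simp [this]
  · have := hδ j (mem_Icc.2 (by omega))
    exact mul_le_mul_of_nonneg_right (sq_le_sq' (by linarith [(abs_le.1 this).1])
      (abs_le.1 this).2) (sq_nonneg _)

lemma aeval_conj {M : Type*} [AddCommGroup M] [Module ℝ M] (V : M ≃ₗ[ℝ] M)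
    (A Λ : Module.End ℝ M) (hA : A = V.toLinearMap ∘ₗ Λ ∘ₗ V.symm.toLinearMap)
    (p : Polynomial ℝ) (u : M) :
    Polynomial.aeval A p u = V (Polynomial.aeval Λ p (V.symm u)) := by
  have hpow : ∀ n : ℕ, (A ^ n) u = V ((Λ ^ n) (V.symm u)) := by
    intro n
    induction n with
    | zero => simp
    | succ n ih =>
      rw [pow_succ', pow_succ', Module.End.mul_apply, ih, hA]
      simp
  induction p using Polynomial.induction_on' with
  | add p q hp hq => simp [hp, hq]
  | monomial n a => simp [Polynomial.aeval_monomial, hpow]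

/-- Preconditioned GMRES convergence (preconditioner P = L): if L⁻¹L^qcf = Ṽ Λ̃ Ṽ⁻¹
with Λ̃ diagonal whose diagonal entries (with multiplicity) coincide with the
generalized eigenvalues of L^qnl v = μ L v, then
min_{deg p ≤ m, p(0)=1} ‖p(L⁻¹L^qcf) L⁻¹r⁰‖_{ℓ²_ε}
  ≤ 2 κ(Ṽ) ((1 − √(A_F/φ''_F))/(1 + √(A_F/φ''_F)))^m ‖L⁻¹r⁰‖_{ℓ²_ε}. -/
theorem stmt13 (N K : ℕ) (hN : 2 ≤ N) (hK1 : 1 ≤ K) (hK2 : (K : ℤ) ≤ (N : ℤ) - 2)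
    (φF φ2F : ℝ) (hφF : 0 < φF) (h2F : φ2F ≤ 0) (hAF : 0 < φF + 4 * φ2F)
    (Linv : Module.End ℝ ↥(Usub N))
    (hLinv : Linv * LapE N = 1 ∧ LapE N * Linv = 1)
    (T : Module.End ℝ ↥(Usub N))
    (hT : ∀ u v : ↥(Usub N), ipE N ((T u : ℤ → ℝ)) (v : ℤ → ℝ)
            = Bqnl N K φF φ2F (u : ℤ → ℝ) (v : ℤ → ℝ))
    (V : ↥(Usub N) ≃ₗ[ℝ] ↥(Usub N)) (Λ : Module.End ℝ ↥(Usub N)) (lam : ℤ → ℝ)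
    (hΛdiag : ∀ u : ↥(Usub N), ∀ j : ℤ, ((Λ u : ℤ → ℝ)) j = lam j * (u : ℤ → ℝ) j)
    (hdecomp : ((Linv * LqcfE N K φF φ2F : Module.End ℝ ↥(Usub N))
          : ↥(Usub N) →ₗ[ℝ] ↥(Usub N))
        = V.toLinearMap ∘ₗ Λ ∘ₗ V.symm.toLinearMap)
    (hspec : ∀ μ : ℝ,
        ((Finset.Icc (-(N : ℤ) + 1) ((N : ℤ) - 1)).filter (fun j => lam j = μ)).card
          = Module.finrank ℝ ↥(LinearMap.ker (T - μ • LapE N)))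
    (m : ℕ) (r0 : ↥(Usub N)) :
    sInf {x : ℝ | ∃ p : Polynomial ℝ, p.natDegree ≤ m ∧ p.eval 0 = 1 ∧
        x = normE N ((Polynomial.aeval (Linv * LqcfE N K φF φ2F) p (Linv r0) : ℤ → ℝ))}
      ≤ 2 * (opNormE N V.toLinearMap * opNormE N V.symm.toLinearMap)
        * ((1 - Real.sqrt ((φF + 4 * φ2F) / φF))
            / (1 + Real.sqrt ((φF + 4 * φ2F) / φF))) ^ m
        * normE N ((Linv r0 : ℤ → ℝ)) := by
  obtain ⟨p, hdeg, hp0, hp⟩ :=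
    exists_poly_small_on_Icc hAF (by linarith : φF + 4 * φ2F ≤ φF) m
  set q := (1 - Real.sqrt ((φF + 4 * φ2F) / φF)) / (1 + Real.sqrt ((φF + 4 * φ2F) / φF)) with hq
  have hδ0 : 0 ≤ 2 * q ^ m :=
    (abs_nonneg _).trans (hp φF (by linarith) le_rfl)
  have hlam : ∀ j ∈ Icc (-(N : ℤ) + 1) ((N : ℤ) - 1), φF + 4 * φ2F ≤ lam j ∧ lam j ≤ φF := by
    intro j hj
    have hcard : LinearMap.ker (T - lam j • LapE N) ≠ ⊥ := by
      intro hbot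
      have h := hspec (lam j)
      rw [hbot, finrank_bot, Finset.card_eq_zero] at h
      exact Finset.notMem_empty j (h ▸ Finset.mem_filter.2 ⟨hj, rfl⟩)
    obtain ⟨v, hv, hv0⟩ := Submodule.exists_mem_ne_zero_of_ne_bot hcard
    have hTv : T v = lam j • LapE N v := by
      simpa [LinearMap.mem_ker, sub_eq_zero] using hv
    have hE := energy_pos hN hLinv.1 hv0
    obtain ⟨hlo, hhi⟩ := Bqnl_bounds (K := K) (φF := φF) hK2 h2F (v : ℤ → ℝ) rfl
    have hB : Bqnl N K φF φ2F (v : ℤ → ℝ) (v : ℤ → ℝ) = lam j * (eps N *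
        ∑ ℓ ∈ Icc (-(N : ℤ) + 1) (N : ℤ), D1 N (v : ℤ → ℝ) ℓ * D1 N (v : ℤ → ℝ) ℓ) := by
      rw [← hT, hTv, ← ipE_lap hN]
      simp only [ipE, Submodule.coe_smul, Pi.smul_apply, smul_eq_mul, mul_assoc,
        ← Finset.mul_sum]
      ring
    rw [hB] at hlo hhi
    exact ⟨le_of_mul_le_mul_right hlo hE, le_of_mul_le_mul_right hhi hE⟩
  refine le_trans (csInf_le ⟨0, ?_⟩ ⟨p, hdeg, hp0, rfl⟩) ?_
  · rintro _ ⟨_, _, _, rfl⟩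
    exact normE_nonneg _ _
  rw [aeval_conj V _ Λ hdecomp]
  have h1 := normE_apply_le hN V.toLinearMap (Polynomial.aeval Λ p (V.symm (Linv r0)))
  have h2 := normE_aeval_diag_le hΛdiag p hδ0
    (fun j hj => hp _ (hlam j hj).1 (hlam j hj).2) (V.symm (Linv r0))
  have h3 := normE_apply_le hN V.symm.toLinearMap (Linv r0)
  calc _ ≤ _ := h1
    _ ≤ opNormE N V.toLinearMap * (2 * q ^ m *
        (opNormE N V.symm.toLinearMap * normE N ((Linv r0 : ℤ → ℝ)))) :=
      mul_le_mul_of_nonneg_left (h2.trans (mul_le_mul_of_nonneg_left h3 hδ0)) (opNormE_nonneg _ _)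
    _ = _ := by ring

end
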